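/- For a ring R and non-negative integers n, k: l.n.sp.gldim(R) ≤ k if and only if every (n,k)-weak cotorsion right R-module is injective. -/

import Mathlib

/-!
Common definitions for formalizing "(n,k)-weak cotorsion modules" over an arbitrary
(not necessarily commutative) ring `R`.  Left `R`-modules are objects of
`ModuleCat R`, right `R`-modules are objects of `ModuleCat Rᵐᵒᵖ`.

Since Mathlib does not provide `Tor` of a right module with a left module over a
noncommutative ring, we encode the vanishing of `Tor_i^R(N, M)` (for `N` a right
module and `M` a left module) by the equivalent condition
`Ext^i_{Rᵐᵒᵖ}(N, M⋆) = 0`, where `M⋆ = Hom_ℤ(M, ℚ/ℤ)` is the character module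
(a right module).  This is equivalent because `ℚ/ℤ` is an injective cogenerator:
`Ext^i_{Rᵐᵒᵖ}(N, M⋆) ≅ (Tor_i^R(N, M))⋆`, and an abelian group vanishes iff its
character group does.
-/

open CategoryTheory

universe u

noncomputable section

/-- The character group `Hom_ℤ(N, ℚ/ℤ)`. -/
def CharGroup (N : Type u) [AddCommGroup N] : Type u := N →+ AddCircle (1 : ℚ)

instance (N : Type u) [AddCommGroup N] : AddCommGroup (CharGroup N) :=
  inferInstanceAs (AddCommGroup (N →+ AddCircle (1 : ℚ)))

namespace CharGroup

variable {N : Type u} [AddCommGroup N]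

/-- View an element of the character group as an additive monoid hom. -/
def toHom (f : CharGroup N) : N →+ AddCircle (1 : ℚ) := f

/-- Build an element of the character group from an additive monoid hom. -/
def ofHom (f : N →+ AddCircle (1 : ℚ)) : CharGroup N := f

theorem hom_ext {f g : CharGroup N} (h : ∀ m, toHom f m = toHom g m) : f = g :=
  AddMonoidHom.ext h

end CharGroup

open CharGroup in
/-- Left module structure on the character group of a right module. -/
instance charGroupModuleLeft (R : Type u) [Ring R] (N : Type u) [AddCommGroup N]
    [Module Rᵐᵒᵖ N] : Module R (CharGroup N) where
  smul r f := ofHom ((toHom f).comp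
    (AddMonoidHom.mk' (fun m => MulOpposite.op r • m) (fun a b => smul_add _ a b)))
  one_smul f := hom_ext fun m => by
    show toHom f (MulOpposite.op (1 : R) • m) = toHom f m
    rw [MulOpposite.op_one, one_smul]
  mul_smul r s f := hom_ext fun m => by
    show toHom f (MulOpposite.op (r * s) • m)
      = toHom f (MulOpposite.op s • MulOpposite.op r • m)
    rw [MulOpposite.op_mul, mul_smul]
  smul_zero r := CharGroup.hom_ext fun m => rfl
  smul_add r f g := CharGroup.hom_ext fun m => rfl
  add_smul r s f := hom_ext fun m => by
    show toHom f (MulOpposite.op (r + s) • m)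
      = toHom f (MulOpposite.op r • m) + toHom f (MulOpposite.op s • m)
    rw [MulOpposite.op_add, add_smul, map_add]
  zero_smul f := hom_ext fun m => by
    show toHom f (MulOpposite.op (0 : R) • m) = 0
    rw [MulOpposite.op_zero, zero_smul, map_zero]

open CharGroup in
/-- Right module structure on the character group of a left module. -/
instance charGroupModuleRight (R : Type u) [Ring R] (N : Type u) [AddCommGroup N]
    [Module R N] : Module Rᵐᵒᵖ (CharGroup N) where
  smul r f := ofHom ((toHom f).comp
    (AddMonoidHom.mk' (fun m => r.unop • m) (fun a b => smul_add _ a b)))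
  one_smul f := hom_ext fun m => by
    show toHom f ((1 : Rᵐᵒᵖ).unop • m) = toHom f m
    rw [MulOpposite.unop_one, one_smul]
  mul_smul r s f := hom_ext fun m => by
    show toHom f ((r * s).unop • m) = toHom f (s.unop • r.unop • m)
    rw [MulOpposite.unop_mul, mul_smul]
  smul_zero r := CharGroup.hom_ext fun m => rfl
  smul_add r f g := CharGroup.hom_ext fun m => rfl
  add_smul r s f := hom_ext fun m => by
    show toHom f ((r + s).unop • m) = toHom f (r.unop • m) + toHom f (s.unop • m)
    rw [MulOpposite.unop_add, add_smul, map_add]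
  zero_smul f := hom_ext fun m => by
    show toHom f ((0 : Rᵐᵒᵖ).unop • m) = 0
    rw [MulOpposite.unop_zero, zero_smul, map_zero]

variable (R : Type u) [Ring R]

/-- `extVanish S i A B` says that `Ext^i_S(A, B) = 0`. -/
def extVanish (S : Type u) [Ring S] (i : ℕ) (A B : ModuleCat.{u} S) : Prop :=
  Subsingleton (((Ext ℤ (ModuleCat.{u} S) i).obj (Opposite.op A)).obj B)

/-- The character module of a right `R`-module, as a left `R`-module. -/
def charLeft (N : ModuleCat.{u} Rᵐᵒᵖ) : ModuleCat.{u} R :=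
  ModuleCat.of R (CharGroup N)

/-- The character module of a left `R`-module, as a right `R`-module. -/
def charRight (M : ModuleCat.{u} R) : ModuleCat.{u} Rᵐᵒᵖ :=
  ModuleCat.of Rᵐᵒᵖ (CharGroup M)

/-- `torVanish R i N M` encodes `Tor_i^R(N, M) = 0` for a right module `N` and a
left module `M`, via the character module duality
`Ext^i_R(M, N⋆) ≅ (Tor_i^R(N, M))⋆`. -/
def torVanish (i : ℕ) (N : ModuleCat.{u} Rᵐᵒᵖ) (M : ModuleCat.{u} R) : Prop :=
  extVanish R i M (charLeft R N)

/-- `K` is a special super finitely presented `S`-module (for the parameter `n`):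
`K` is the image of `F_n → F_{n-1}` in a projective resolution
`⋯ → F_{n+1} → F_n → ⋯ → F_0 → U → 0` of some module `U` in which `F_i` is finitely
generated projective for all `i ≥ n`.  (For `n = 0` the distinguished module is `U`
itself, matching `Ext^{n+1}(U, -) ≅ Ext^1(K_{n-1}, -)`.) -/
def IsSpecialSFP (S : Type u) [Ring S] (n : ℕ) (K : ModuleCat.{u} S) : Prop :=
  ∃ (U : ModuleCat.{u} S) (F : ℕ → ModuleCat.{u} S)
    (d : ∀ i, F (i + 1) →ₗ[S] F i) (π : F 0 →ₗ[S] U),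
      (∀ i, Module.Projective S (F i)) ∧
      (∀ i, n ≤ i → Module.Finite S (F i)) ∧
      Function.Surjective π ∧ Function.Exact (d 0) π ∧
      (∀ i, Function.Exact (d (i + 1)) (d i)) ∧
      (if n = 0 then Nonempty ((K : Type u) ≃ₗ[S] U)
       else Nonempty ((K : Type u) ≃ₗ[S] LinearMap.range (d (n - 1))))

/-- The `n`-weak injective dimension of a left `S`-module `M` is at most `k`. -/
def nwidLE (S : Type u) [Ring S] (n k : ℕ) (M : ModuleCat.{u} S) : Prop :=
  ∀ K : ModuleCat.{u} S, IsSpecialSFP S n K → extVanish S (k + 1) K M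

/-- The `n`-weak flat dimension of a right `R`-module `N` is at most `k`:
`Tor_{k+1}^R(N, K) = 0` for every special super finitely presented left module `K`. -/
def nwfdLE (n k : ℕ) (N : ModuleCat.{u} Rᵐᵒᵖ) : Prop :=
  ∀ K : ModuleCat.{u} R, IsSpecialSFP R n K → torVanish R (k + 1) N K

/-- A right `R`-module `M` is `(n,k)`-weak cotorsion if `Ext^1(N, M) = 0` for every
right module `N` of `n`-weak flat dimension at most `k`. -/
def IsNKWeakCotorsion (n k : ℕ) (M : ModuleCat.{u} Rᵐᵒᵖ) : Prop :=
  ∀ N : ModuleCat.{u} Rᵐᵒᵖ, nwfdLE R n k N → extVanish Rᵐᵒᵖ 1 N M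

/-- Projective dimension at most `k`, via Ext vanishing. -/
def pdLE (S : Type u) [Ring S] (k : ℕ) (K : ModuleCat.{u} S) : Prop :=
  ∀ M : ModuleCat.{u} S, extVanish S (k + 1) K M

/-- Injective dimension at most `k`, via Ext vanishing. -/
def idLE (S : Type u) [Ring S] (k : ℕ) (M : ModuleCat.{u} S) : Prop :=
  ∀ N : ModuleCat.{u} S, extVanish S (k + 1) N M

/-- Flat dimension of a right module at most `k`, via Tor vanishing. -/
def fdLE (k : ℕ) (N : ModuleCat.{u} Rᵐᵒᵖ) : Prop :=
  ∀ A : ModuleCat.{u} R, torVanish R (k + 1) N A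

/-- `l.n.sp.gldim(R) ≤ k` : every special super finitely presented left module has
projective dimension at most `k`. -/
def lnspGldimLE (n k : ℕ) : Prop :=
  ∀ K : ModuleCat.{u} R, IsSpecialSFP R n K → pdLE R k K

/-- `w.gl.dim(R) ≤ k`. -/
def wGldimLE (k : ℕ) : Prop :=
  ∀ N : ModuleCat.{u} Rᵐᵒᵖ, fdLE R k N

/-- A right `R`-module `M` is `k`-cotorsion if `Ext^1(F, M) = 0` for every right
module `F` of flat dimension at most `k`. -/
def IsKCotorsion (k : ℕ) (M : ModuleCat.{u} Rᵐᵒᵖ) : Prop :=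
  ∀ F : ModuleCat.{u} Rᵐᵒᵖ, fdLE R k F → extVanish Rᵐᵒᵖ 1 F M

/-- `φ : E → D` is a `𝒞`-precover of `D`. -/
def IsPrecover (S : Type u) [Ring S] (𝒞 : ModuleCat.{u} S → Prop)
    (E D : ModuleCat.{u} S) (φ : E →ₗ[S] D) : Prop :=
  𝒞 E ∧ ∀ F : ModuleCat.{u} S, 𝒞 F → ∀ g : F →ₗ[S] D, ∃ h : F →ₗ[S] E, φ ∘ₗ h = g

/-- `φ : E → D` is a `𝒞`-cover of `D`. -/
def IsCover (S : Type u) [Ring S] (𝒞 : ModuleCat.{u} S → Prop)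
    (E D : ModuleCat.{u} S) (φ : E →ₗ[S] D) : Prop :=
  IsPrecover S 𝒞 E D φ ∧ ∀ g : E →ₗ[S] E, φ ∘ₗ g = φ → Function.Bijective g

/-- `f : X → F` is a `𝒞`-preenvelope of `X`. -/
def IsPreenvelope (S : Type u) [Ring S] (𝒞 : ModuleCat.{u} S → Prop)
    (X F : ModuleCat.{u} S) (f : X →ₗ[S] F) : Prop :=
  𝒞 F ∧ ∀ F' : ModuleCat.{u} S, 𝒞 F' → ∀ g : X →ₗ[S] F', ∃ h : F →ₗ[S] F', h ∘ₗ f = g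

/-- A module is reduced if it has no nonzero injective submodules. -/
def IsReducedModule (S : Type u) [Ring S] (M : ModuleCat.{u} S) : Prop :=
  ∀ N : Submodule S M, Module.Injective S N → N = ⊥

/-- `D` is an `m`-th cosyzygy of `M`: there is an exact sequence
`0 → M → E^0 → ⋯ → E^{m-1} → D → 0` with each `E^i` injective. -/
def IsCosyzygy (S : Type u) [Ring S] : ℕ → ModuleCat.{u} S → ModuleCat.{u} S → Prop
  | 0, M, D => Nonempty ((M : Type u) ≃ₗ[S] D)
  | m + 1, M, D => ∃ (C E : ModuleCat.{u} S), IsCosyzygy S m M C ∧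
      Module.Injective S E ∧
      ∃ (ι : C →ₗ[S] E) (p : E →ₗ[S] D),
        Function.Injective ι ∧ Function.Surjective p ∧ Function.Exact ι p


/-- A left `R`-module `F` is flat: `Tor_1(A, F) = 0` for every right module `A`
(encoded via character duality, as above). -/
def IsFlatModule (R : Type u) [Ring R] (F : ModuleCat.{u} R) : Prop :=
  ∀ A : ModuleCat.{u} Rᵐᵒᵖ, torVanish R 1 A F

end

/-!
If `l.n.sp.gldim(R) ≤ k`, then every right module has `n`-weak flat dimension at most `k`, so the
`(n,k)`-weak cotorsion modules are the injective ones.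

Conversely, write `M⋆` for the character module. For a special super finitely presented module `K`,
dimension shifting produces a finitely presented module `C` such that, for all `M`,
`Ext^{k+1}(K, M) = 0` iff `Ext^1(C, M) = 0`. Swapping the arguments of a pairing gives
`Ext^1(C, N⋆) = 0 ↔ Ext^1(N, C⋆) = 0`, so `C⋆` is `(n,k)`-weak cotorsion. If it is injective, then
swapping back gives `Ext^1(C, M⋆⋆) = 0` for all `M`, and since `M` is pure in `M⋆⋆` and `C` is
finitely presented, `Ext^1(C, M) = 0`.
-/

section AbelianExt

open Abelian

universe v w w'

variable {C : Type w'} [Category.{v} C] [Abelian C]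

section

variable [HasExt.{w} C] {T : ShortComplex C} (hT : T.ShortExact)

include hT

theorem subsingleton_ext_one_iff_exists_extension [Projective T.X₂] (M : C) :
    Subsingleton (Ext T.X₃ M 1) ↔ ∀ g : T.X₁ ⟶ M, ∃ h : T.X₂ ⟶ M, T.f ≫ h = g := by
  constructor
  · intro _ g
    obtain ⟨h, hh⟩ := Ext.contravariant_sequence_exact₁ hT M (Ext.mk₀ g) (add_zero 1)
      (Subsingleton.elim _ _)
    obtain ⟨h, rfl⟩ := Ext.homEquiv₀.symm.surjective h
    exact ⟨h, Ext.homEquiv₀.symm.injective (by simpa using hh)⟩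
  · refine fun H => subsingleton_of_forall_eq 0 fun e => ?_
    obtain ⟨g, rfl⟩ := Ext.contravariant_sequence_exact₃ hT M e (Ext.eq_zero_of_projective _)
      (add_zero 1)
    obtain ⟨g, rfl⟩ := Ext.homEquiv₀.symm.surjective g
    obtain ⟨h, rfl⟩ := H g
    simp [← Ext.mk₀_comp_mk₀]

theorem subsingleton_ext_one_iff_exists_lift [Injective T.X₂] (N : C) :
    Subsingleton (Ext N T.X₁ 1) ↔ ∀ g : N ⟶ T.X₃, ∃ h : N ⟶ T.X₂, h ≫ T.g = g := by
  constructor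
  · intro _ g
    obtain ⟨h, hh⟩ := Ext.covariant_sequence_exact₃ N hT (Ext.mk₀ g) (zero_add 1)
      (Subsingleton.elim _ _)
    obtain ⟨h, rfl⟩ := Ext.homEquiv₀.symm.surjective h
    exact ⟨h, Ext.homEquiv₀.symm.injective (by simpa using hh)⟩
  · refine fun H => subsingleton_of_forall_eq 0 fun e => ?_
    obtain ⟨g, rfl⟩ := Ext.covariant_sequence_exact₁ N hT e (Ext.eq_zero_of_injective _)
      (zero_add 1)
    obtain ⟨g, rfl⟩ := Ext.homEquiv₀.symm.surjective g
    obtain ⟨h, rfl⟩ := H g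
    simp [← Ext.mk₀_comp_mk₀]

theorem subsingleton_ext_add_two_iff [Projective T.X₂] (M : C) (k : ℕ) :
    Subsingleton (Ext T.X₃ M (k + 2)) ↔ Subsingleton (Ext T.X₁ M (k + 1)) := by
  have hk : 1 + (k + 1) = k + 2 := by lia
  constructor
  · refine fun _ => subsingleton_of_forall_eq 0 fun e => ?_
    obtain ⟨e', rfl⟩ := Ext.contravariant_sequence_exact₁ hT M e hk (Subsingleton.elim _ _)
    rw [Ext.eq_zero_of_projective e', Ext.comp_zero]
  · refine fun _ => subsingleton_of_forall_eq 0 fun e => ?_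
    obtain ⟨e', rfl⟩ := Ext.contravariant_sequence_exact₃ hT M e (Ext.eq_zero_of_projective _) hk
    rw [Subsingleton.elim e' 0, Ext.comp_zero]

end

theorem subsingleton_ext_succ_iff_of_projectiveResolution [HasExt.{w} C] {A : C}
    (P : ProjectiveResolution A) (B : C) (i : ℕ) :
    Subsingleton (Ext A B (i + 1)) ↔ ∀ f : P.complex.X (i + 1) ⟶ B,
      P.complex.d (i + 2) (i + 1) ≫ f = 0 →
        ∃ g : P.complex.X i ⟶ B, P.complex.d (i + 1) i ≫ g = f := by
  constructor
  · exact fun _ f hf =>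
      (P.extMk_eq_zero_iff f (i + 2) rfl hf i rfl).1 (Subsingleton.elim _ _)
  · refine fun H => subsingleton_of_forall_eq 0 fun e => ?_
    obtain ⟨f, hf, rfl⟩ := P.extMk_surjective e (i + 2) rfl
    exact (P.extMk_eq_zero_iff f (i + 2) rfl hf i rfl).2 (H f hf)

theorem isZero_derivedExt_succ_iff_of_projectiveResolution (k : Type*) [Ring k] [Linear k C]
    [EnoughProjectives C] {A : C} (P : ProjectiveResolution A) (B : C) (i : ℕ) :
    Limits.IsZero (((_root_.Ext k C (i + 1)).obj (Opposite.op A)).obj B) ↔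
      ∀ f : P.complex.X (i + 1) ⟶ B, P.complex.d (i + 2) (i + 1) ≫ f = 0 →
        ∃ g : P.complex.X i ⟶ B, P.complex.d (i + 1) i ≫ g = f := by
  rw [(P.isoExt (i + 1) B).isZero_iff, ← HomologicalComplex.exactAt_iff_isZero_homology,
    HomologicalComplex.exactAt_iff' _ i (i + 1) (i + 2) (by simp) (by simp),
    ShortComplex.moduleCat_exact_iff]
  rfl

end AbelianExt

section ModuleExt

variable {S : Type u} [Ring S]

theorem extVanish_succ_iff_subsingleton_ext (i : ℕ) (A B : ModuleCat.{u} S) :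
    extVanish S (i + 1) A B ↔ Subsingleton (Abelian.Ext A B (i + 1)) := by
  rw [extVanish, ← ModuleCat.isZero_iff_subsingleton,
    isZero_derivedExt_succ_iff_of_projectiveResolution ℤ (ProjectiveResolution.of A),
    subsingleton_ext_succ_iff_of_projectiveResolution (ProjectiveResolution.of A)]

theorem injective_iff_forall_extVanish_one (M : ModuleCat.{u} S) :
    Module.Injective S M ↔ ∀ N : ModuleCat.{u} S, extVanish S 1 N M := by
  simp only [extVanish_succ_iff_subsingleton_ext]
  exact (Module.injective_iff_injective_object S M).trans injective_iff_subsingleton_ext_one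

theorem extVanish_one_iff_exists_lift {A E B : ModuleCat.{u} S} [Module.Injective S E]
    (i : A →ₗ[S] E) (q : E →ₗ[S] B) (hi : Function.Injective i) (hiq : Function.Exact i q)
    (hq : Function.Surjective q) (N : ModuleCat.{u} S) :
    extVanish S 1 N A ↔ ∀ g : N →ₗ[S] B, ∃ h : N →ₗ[S] E, q ∘ₗ h = g := by
  let T := ModuleCat.shortComplexOfCompEqZero i q hiq.linearMap_comp_eq_zero
  have hT : T.ShortExact := ModuleCat.shortComplex_shortExact T hiq hi hq
  have : Injective T.X₂ := (Module.injective_iff_injective_object S E).1 inferInstance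
  rw [extVanish_succ_iff_subsingleton_ext]
  refine (subsingleton_ext_one_iff_exists_lift hT N).trans ⟨fun H g => ?_, fun H g => ?_⟩
  · obtain ⟨h, hh⟩ := H (ModuleCat.ofHom g)
    exact ⟨h.hom, congrArg ModuleCat.Hom.hom hh⟩
  · obtain ⟨h, hh⟩ := H g.hom
    exact ⟨ModuleCat.ofHom h, ModuleCat.hom_ext hh⟩

variable {P N : ModuleCat.{u} S} [Module.Projective S P] (p : P →ₗ[S] N)
  (hp : Function.Surjective p)

include hp

theorem extVanish_one_iff_exists_extension (M : ModuleCat.{u} S) :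
    extVanish S 1 N M ↔ ∀ g : LinearMap.ker p →ₗ[S] M,
      ∃ h : P →ₗ[S] M, h ∘ₗ (LinearMap.ker p).subtype = g := by
  have : Projective P := (IsProjective.iff_projective P).1 inferInstance
  rw [extVanish_succ_iff_subsingleton_ext,
    subsingleton_ext_one_iff_exists_extension (LinearMap.shortExact_shortComplexKer hp)]
  refine ⟨fun H g => ?_, fun H g => ?_⟩
  · obtain ⟨h, hh⟩ := H (ModuleCat.ofHom g)
    exact ⟨h.hom, congrArg ModuleCat.Hom.hom hh⟩
  · obtain ⟨h, hh⟩ := H g.hom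
    exact ⟨ModuleCat.ofHom h, ModuleCat.hom_ext hh⟩

theorem extVanish_add_two_iff_ker (M : ModuleCat.{u} S) (k : ℕ) :
    extVanish S (k + 2) N M ↔ extVanish S (k + 1) (ModuleCat.of S (LinearMap.ker p)) M := by
  have : Projective P := (IsProjective.iff_projective P).1 inferInstance
  rw [extVanish_succ_iff_subsingleton_ext, extVanish_succ_iff_subsingleton_ext]
  exact subsingleton_ext_add_two_iff (LinearMap.shortExact_shortComplexKer hp) M k

end ModuleExt

namespace CharGroup

section AddCommGroup

variable {A B : Type u} [AddCommGroup A] [AddCommGroup B]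

theorem exists_toHom_comp_eq {f : A →+ B} (hf : Function.Injective f) (c : CharGroup A) :
    ∃ c' : CharGroup B, ∀ a, toHom c' (f a) = toHom c a := by
  obtain ⟨c', hc'⟩ := CharacterModule.dual_surjective_of_injective f.toIntLinearMap hf c
  exact ⟨c', fun a => DFunLike.congr_fun hc' a⟩

theorem exists_toHom_ne_zero_of_notMem {T : AddSubgroup A} {a : A} (ha : a ∉ T) :
    ∃ c : CharGroup A, (∀ t ∈ T, toHom c t = 0) ∧ toHom c a ≠ 0 := by
  have ha' : (a : A ⧸ T) ≠ 0 := by rwa [Ne, QuotientAddGroup.eq_zero_iff]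
  obtain ⟨c, hc⟩ := CharacterModule.exists_character_apply_ne_zero_of_ne_zero ha'
  refine ⟨ofHom (AddMonoidHom.comp c (QuotientAddGroup.mk' T)), fun t ht => ?_, hc⟩
  exact (congrArg c ((QuotientAddGroup.eq_zero_iff t).2 ht)).trans (map_zero c)

theorem toHom_sum {ι : Type*} (s : Finset ι) (c : ι → CharGroup A) (a : A) :
    toHom (∑ i ∈ s, c i) a = ∑ i ∈ s, toHom (c i) a :=
  map_sum (AddMonoidHom.mk' (fun c => toHom c a) fun _ _ => rfl) c s

/-- The restriction of a character of `ι → A` to the `i`-th summand. -/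
def component {ι : Type} [DecidableEq ι] (c : CharGroup (ι → A)) (i : ι) : CharGroup A :=
  ofHom ((toHom c).comp (AddMonoidHom.single (fun _ => A) i))

theorem sum_toHom_component {ι : Type} [Fintype ι] [DecidableEq ι] (c : CharGroup (ι → A))
    (b : ι → A) : ∑ i, toHom (component c i) (b i) = toHom c b :=
  (map_sum (toHom c) _ _).symm.trans (congrArg (toHom c) (Finset.univ_sum_single b))

end AddCommGroup

variable {R : Type u} [Ring R]

section Dual

variable {A B : Type u} [AddCommGroup A] [AddCommGroup B]

/-- Precomposition with a map of right modules, as a map of the left character modules. -/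
def dualLeft [Module Rᵐᵒᵖ A] [Module Rᵐᵒᵖ B] (f : A →ₗ[Rᵐᵒᵖ] B) :
    CharGroup B →ₗ[R] CharGroup A where
  toFun c := ofHom ((toHom c).comp f.toAddMonoidHom)
  map_add' _ _ := rfl
  map_smul' r c := hom_ext fun a => congrArg (toHom c) (f.map_smul (MulOpposite.op r) a).symm

/-- Precomposition with a map of left modules, as a map of the right character modules. -/
def dualRight [Module R A] [Module R B] (f : A →ₗ[R] B) :
    CharGroup B →ₗ[Rᵐᵒᵖ] CharGroup A where
  toFun c := ofHom ((toHom c).comp f.toAddMonoidHom)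
  map_add' _ _ := rfl
  map_smul' r c := hom_ext fun a => congrArg (toHom c) (f.map_smul r.unop a).symm

theorem dualLeft_surjective [Module Rᵐᵒᵖ A] [Module Rᵐᵒᵖ B] {f : A →ₗ[Rᵐᵒᵖ] B}
    (hf : Function.Injective f) : Function.Surjective (dualLeft f) := fun c =>
  (exists_toHom_comp_eq (f := f.toAddMonoidHom) hf c).imp fun _ => hom_ext

variable [Module R A] [Module R B]

theorem dualRight_surjective {f : A →ₗ[R] B} (hf : Function.Injective f) :
    Function.Surjective (dualRight f) := fun c =>
  (exists_toHom_comp_eq (f := f.toAddMonoidHom) hf c).imp fun _ => hom_ext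

theorem dualRight_injective {f : A →ₗ[R] B} (hf : Function.Surjective f) :
    Function.Injective (dualRight f) := fun _ _ h =>
  hom_ext <| hf.forall.2 fun a => congrArg (fun c => toHom c a) h

theorem dualRight_exact {D : Type u} [AddCommGroup D] [Module R D] {f : A →ₗ[R] B}
    {g : B →ₗ[R] D} (hfg : Function.Exact f g) (hg : Function.Surjective g) :
    Function.Exact (dualRight g) (dualRight f) := by
  intro c
  constructor
  · intro hc
    have hker : g.toAddMonoidHom.ker ≤ (toHom c).ker := fun b hb => by
      obtain ⟨a, rfl⟩ := (hfg b).1 hb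
      exact congrArg (fun c => toHom c a) hc
    exact ⟨ofHom (g.toAddMonoidHom.liftOfSurjective hg ⟨toHom c, hker⟩), hom_ext fun b =>
      g.toAddMonoidHom.liftOfRightInverse_comp_apply _ (Function.rightInverse_surjInv hg)
        ⟨toHom c, hker⟩ b⟩
  · rintro ⟨c', rfl⟩
    refine hom_ext fun a => ?_
    exact (congrArg (toHom c') (hfg.apply_apply_eq_zero a)).trans (map_zero _)

end Dual

section HomFlip

variable {A B : Type u} [AddCommGroup A] [AddCommGroup B] [Module R A] [Module Rᵐᵒᵖ B]

/-- Swapping the arguments of a balanced pairing with values in `ℚ/ℤ`; this is the encoding used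
here of the two adjunctions `Hom(A, B⋆) ≃ (B ⊗ A)⋆ ≃ Hom(B, A⋆)`. -/
def homFlip : (A →ₗ[R] CharGroup B) ≃ (B →ₗ[Rᵐᵒᵖ] CharGroup A) where
  toFun f :=
    { toFun b := ofHom <| AddMonoidHom.mk' (fun a => toHom (f a) b) fun a a' =>
        congrArg (fun c => toHom c b) (f.map_add a a')
      map_add' b b' := hom_ext fun a => (toHom (f a)).map_add b b'
      map_smul' r b := hom_ext fun a =>
        (congrArg (fun c => toHom c b) (f.map_smul r.unop a)).symm }
  invFun g :=
    { toFun a := ofHom <| AddMonoidHom.mk' (fun b => toHom (g b) a) fun b b' =>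
        congrArg (fun c => toHom c a) (g.map_add b b')
      map_add' a a' := hom_ext fun b => (toHom (g b)).map_add a a'
      map_smul' r a := hom_ext fun b =>
        (congrArg (fun c => toHom c a) (g.map_smul (MulOpposite.op r) b)).symm }
  left_inv _ := rfl
  right_inv _ := rfl

theorem dualRight_comp_homFlip_eq_iff {A' : Type u} [AddCommGroup A'] [Module R A'] (f : A' →ₗ[R] A)
    (h : A →ₗ[R] CharGroup B) (g : A' →ₗ[R] CharGroup B) :
    dualRight f ∘ₗ homFlip h = homFlip g ↔ h ∘ₗ f = g :=
  (homFlip (A := A')).injective.eq_iff (a := h ∘ₗ f)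

theorem homFlip_dualLeft_comp {B' : Type u} [AddCommGroup B'] [Module Rᵐᵒᵖ B']
    (f : B' →ₗ[Rᵐᵒᵖ] B) (h : A →ₗ[R] CharGroup B) :
    homFlip (dualLeft f ∘ₗ h) = homFlip h ∘ₗ f :=
  rfl

theorem injective_of_projective [Module.Projective R A] :
    Module.Injective Rᵐᵒᵖ (CharGroup A) where
  out X Y _ _ _ _ f hf g := by
    obtain ⟨h, hh⟩ := Module.projective_lifting_property (dualLeft f) (homFlip.symm g)
      (dualLeft_surjective hf)
    refine ⟨homFlip h, LinearMap.congr_fun (?_ : homFlip h ∘ₗ f = g)⟩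
    rw [← homFlip_dualLeft_comp, hh, Equiv.apply_symm_apply]

end HomFlip

section Purity

variable (R) {M : Type u} [AddCommGroup M] [Module R M]

/-- The canonical map from a left module to its double character module. -/
def evaluation : M →ₗ[R] CharGroup (CharGroup M) :=
  homFlip.symm LinearMap.id

variable {R}

theorem exists_sum_smul_eq_of_evaluation {ι κ : Type} [Finite ι] [Fintype κ]
    (a : ι → κ → R) (b : ι → M) (y : κ → CharGroup (CharGroup M))
    (hy : ∀ i, ∑ j, a i j • y j = evaluation R (b i)) :
    ∃ x : κ → M, ∀ i, ∑ j, a i j • x j = b i := by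
  classical
  have := Fintype.ofFinite ι
  let L : (κ → M) →+ (ι → M) :=
    AddMonoidHom.mk' (fun x i => ∑ j, a i j • x j) fun x x' => by
      ext i
      simp [smul_add, Finset.sum_add_distrib]
  suffices hb : b ∈ L.range from hb.imp fun x hx i => congrFun hx i
  by_contra hb
  obtain ⟨c, hcL, hcb⟩ := exists_toHom_ne_zero_of_notMem hb
  have hc : ∀ j, ∑ i, MulOpposite.op (a i j) • component c i = 0 := fun j => hom_ext fun v => by
    have hL : L (Pi.single j v) = fun i => a i j • v := funext fun i => by
      simp [L, Pi.single_apply]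
    calc toHom (∑ i, MulOpposite.op (a i j) • component c i) v
        = ∑ i, toHom (component c i) (a i j • v) := toHom_sum _ _ v
      _ = toHom c (L (Pi.single j v)) := by rw [hL, ← sum_toHom_component]
      _ = 0 := hcL _ ⟨_, rfl⟩
  apply hcb
  calc toHom c b = ∑ i, toHom (evaluation R (b i)) (component c i) :=
        (sum_toHom_component c b).symm
    _ = ∑ i, ∑ j, toHom (y j) (MulOpposite.op (a i j) • component c i) :=
        Finset.sum_congr rfl fun i _ => by rw [← hy, toHom_sum]; rfl
    _ = ∑ j, toHom (y j) (∑ i, MulOpposite.op (a i j) • component c i) := by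
        rw [Finset.sum_comm]; simp only [map_sum]
    _ = 0 := by simp only [hc, map_zero, Finset.sum_const_zero]

end Purity

end CharGroup

section CharExt

open CharGroup

variable {R : Type u} [Ring R]

theorem extVanish_one_charLeft_iff_charRight (C : ModuleCat.{u} R) (N : ModuleCat.{u} Rᵐᵒᵖ) :
    extVanish R 1 C (charLeft R N) ↔ extVanish Rᵐᵒᵖ 1 N (charRight R C) := by
  let F := ModuleCat.of R (C →₀ R)
  let p : F →ₗ[R] C := Finsupp.linearCombination R id
  have hp : Function.Surjective p := Finsupp.linearCombination_id_surjective R C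
  let j := (LinearMap.ker p).subtype
  have : Module.Injective Rᵐᵒᵖ (charRight R F) := injective_of_projective
  rw [extVanish_one_iff_exists_extension p hp,
    extVanish_one_iff_exists_lift (E := charRight R F)
      (B := charRight R (ModuleCat.of R (LinearMap.ker p))) (dualRight p) (dualRight j)
      (dualRight_injective hp) (dualRight_exact (LinearMap.exact_subtype_ker_map p) hp)
      (dualRight_surjective Subtype.val_injective)]
  exact homFlip.forall_congr fun {g} => homFlip.exists_congr fun h =>
    (dualRight_comp_homFlip_eq_iff _ h g).symm

theorem extVanish_one_of_charLeft_charRight {C M : ModuleCat.{u} R} [Module.FinitePresentation R C]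
    (hCM : extVanish R 1 C (charLeft R (charRight R M))) : extVanish R 1 C M := by
  obtain ⟨n, m, f, g, hf, hgf⟩ := Module.FinitePresentation.exists_fin' R C
  let P := ModuleCat.of R (Fin n → R)
  let g' : (Fin m → R) →ₗ[R] LinearMap.ker f := g.codRestrict _ hgf.apply_apply_eq_zero
  have hg' : Function.Surjective g' := fun z =>
    ((hgf z).1 z.2).imp fun _ => Subtype.ext
  rw [extVanish_one_iff_exists_extension (P := P) f hf] at hCM ⊢
  intro s
  obtain ⟨h, hh⟩ := hCM (evaluation R ∘ₗ s)
  obtain ⟨x, hx⟩ := exists_sum_smul_eq_of_evaluation (fun i : Fin m => g (Pi.single i 1))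
    (fun i => s (g' (Pi.single i 1))) _ fun i =>
      (LinearMap.pi_apply_eq_sum_univ h _).symm.trans (LinearMap.congr_fun hh (g' (Pi.single i 1)))
  refine ⟨Fintype.linearCombination R x, ?_⟩
  rw [← LinearMap.cancel_right hg']
  exact (Pi.basisFun R (Fin m)).ext fun i => by
    rw [Pi.basisFun_apply]
    exact hx i

end CharExt

namespace IsSpecialSFP

variable {S : Type u} [Ring S]

theorem exists_cover {n : ℕ} {K : ModuleCat.{u} S} (hK : IsSpecialSFP S n K) :
    ∃ (P : ModuleCat.{u} S) (p : P →ₗ[S] K), Module.Finite S P ∧ Module.Projective S P ∧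
      Function.Surjective p ∧ IsSpecialSFP S (n + 1) (ModuleCat.of S (LinearMap.ker p)) := by
  obtain ⟨U, F, d, π, hproj, hfin, hπ, hdπ, hd, hK⟩ := hK
  have hfin' : ∀ i, n + 1 ≤ i → Module.Finite S (F i) := fun i hi => hfin i (by lia)
  cases n with
  | zero =>
    obtain ⟨e⟩ := hK
    refine ⟨F 0, e.symm ∘ₗ π, hfin 0 le_rfl, hproj 0, e.symm.surjective.comp hπ,
      U, F, d, π, hproj, hfin', hπ, hdπ, hd, ⟨LinearEquiv.ofEq _ _ ?_⟩⟩
    rw [LinearEquiv.ker_comp, hdπ.linearMap_ker_eq]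
  | succ m =>
    obtain ⟨e : K ≃ₗ[S] LinearMap.range (d m)⟩ := hK
    refine ⟨F (m + 1), e.symm ∘ₗ (d m).rangeRestrict, hfin _ le_rfl, hproj _,
      e.symm.surjective.comp (d m).surjective_rangeRestrict,
      U, F, d, π, hproj, hfin', hπ, hdπ, hd, ⟨LinearEquiv.ofEq _ _ ?_⟩⟩
    rw [LinearEquiv.ker_comp, LinearMap.ker_rangeRestrict, (hd m).linearMap_ker_eq]
    rfl

theorem finite {n : ℕ} {K : ModuleCat.{u} S} (hK : IsSpecialSFP S n K) : Module.Finite S K := by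
  obtain ⟨P, p, _, _, hp, _⟩ := hK.exists_cover
  exact Module.Finite.of_surjective p hp

theorem finitePresentation {n : ℕ} {K : ModuleCat.{u} S} (hK : IsSpecialSFP S n K) :
    Module.FinitePresentation S K := by
  obtain ⟨P, p, _, _, hp, hker⟩ := hK.exists_cover
  have := Module.finitePresentation_of_projective S P
  exact Module.finitePresentation_of_surjective p hp (Module.Finite.iff_fg.1 hker.finite)

theorem exists_finitePresentation_extVanish_iff {n : ℕ} {K : ModuleCat.{u} S}
    (hK : IsSpecialSFP S n K) (k : ℕ) :
    ∃ C : ModuleCat.{u} S, Module.FinitePresentation S C ∧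
      ∀ M : ModuleCat.{u} S, extVanish S (k + 1) K M ↔ extVanish S 1 C M := by
  induction k generalizing n K with
  | zero => exact ⟨K, hK.finitePresentation, fun _ => Iff.rfl⟩
  | succ k ih =>
    obtain ⟨P, p, _, _, hp, hker⟩ := hK.exists_cover
    obtain ⟨C, hC, hCk⟩ := ih hker
    exact ⟨C, hC, fun M => (extVanish_add_two_iff_ker p hp M k).trans (hCk M)⟩

end IsSpecialSFP

/-- `l.n.sp.gldim(R) ≤ k` iff every `(n,k)`-weak cotorsion right
module is injective. -/
theorem stmt14 (R : Type u) [Ring R] (n k : ℕ) :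
    lnspGldimLE R n k ↔
      (∀ M : ModuleCat.{u} Rᵐᵒᵖ, IsNKWeakCotorsion R n k M →
        Module.Injective Rᵐᵒᵖ M) := by
  constructor
  · exact fun h M hM => (injective_iff_forall_extVanish_one M).2 fun N =>
      hM N fun K hK => h K hK (charLeft R N)
  · intro h K hK M
    obtain ⟨C, _, hC⟩ := hK.exists_finitePresentation_extVanish_iff k
    have hcot : IsNKWeakCotorsion R n k (charRight R C) := fun N hN =>
      (extVanish_one_charLeft_iff_charRight C N).1 ((hC _).1 (hN K hK))
    have hinj : extVanish Rᵐᵒᵖ 1 (charRight R M) (charRight R C) :=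
      (injective_iff_forall_extVanish_one _).1 (h _ hcot) _
    exact (hC M).2 <| extVanish_one_of_charLeft_charRight <|
      (extVanish_one_charLeft_iff_charRight C _).2 hinj
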